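/- Characterization of the cone C ∩ 10 (Table 2): a vector α ∈ ℝ^7 with components (α_A, α_B, α_V, α_AB, α_AV, α_BV, α_ABV) is 1A-valid, 0B-valid, and satisfies α_V + α_AV + α_BV + α_ABV ≥ 0 if and only if α is a nonnegative real linear combination of the seven vectors (0,0,0,0,1,0,0), (1,1,0,−1,0,0,0), (0,0,−1,0,1,1,−1), (1,1,0,0,1,−1,0), (0,0,−1,1,2,0,−1), (0,1,0,0,1,0,−1), (1,0,−1,0,1,0,0). -/

import Mathlib

/-- Strong subadditivity for an entropy function `S` on subsets of the party set `P`: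
for pairwise disjoint `X Y Z`, `S(X∪Z) + S(Y∪Z) ≥ S(X∪Y∪Z) + S(Z)`. -/
def SSAfn {P : Type} [DecidableEq P] (S : Finset P → ℝ) : Prop :=
  ∀ X Y Z : Finset P, Disjoint X Y → Disjoint X Z → Disjoint Y Z →
    S (X ∪ Z) + S (Y ∪ Z) ≥ S (X ∪ Y ∪ Z) + S Z

/-- Weak monotonicity for an entropy function `S` on subsets of the party set `P`:
for pairwise disjoint `X Y Z`, `S(X∪Z) + S(Y∪Z) ≥ S(X) + S(Y)`. -/
def WMfn {P : Type} [DecidableEq P] (S : Finset P → ℝ) : Prop :=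
  ∀ X Y Z : Finset P, Disjoint X Y → Disjoint X Z → Disjoint Y Z →
    S (X ∪ Z) + S (Y ∪ Z) ≥ S X + S Y

/-- `α ∈ ℝ^7` (components ordered `α_A, α_B, α_V, α_AB, α_AV, α_BV, α_ABV`) is 0A-valid:
for every entropy function on the four parties `0 = A1`, `1 = A2`, `2 = B`, `3 = V`
satisfying SSA and WM,
`α_A S_{A2|A1} + α_AB S_{A2|A1B} + α_AV S_{A2|A1V} + α_ABV S_{A2|A1BV} ≥ 0`. -/
def Valid0A (α : Fin 7 → ℝ) : Prop :=
  ∀ S : Finset (Fin 4) → ℝ, S ∅ = 0 → SSAfn S → WMfn S →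
    α 0 * (S {0, 1} - S {0}) + α 3 * (S {0, 1, 2} - S {0, 2}) +
      α 4 * (S {0, 1, 3} - S {0, 3}) + α 6 * (S {0, 1, 2, 3} - S {0, 2, 3}) ≥ 0

/-- `α ∈ ℝ^7` is 1A-valid: for every entropy function on the four parties
`0 = A1`, `1 = A2`, `2 = B`, `3 = V` satisfying SSA and WM,
`α_A S_{A2|A1} + α_AB S_{A2|A1B} − α_BV S_{A2|BV} − α_V S_{A2|V} ≥ 0`. -/
def Valid1A (α : Fin 7 → ℝ) : Prop :=
  ∀ S : Finset (Fin 4) → ℝ, S ∅ = 0 → SSAfn S → WMfn S →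
    α 0 * (S {0, 1} - S {0}) + α 3 * (S {0, 1, 2} - S {0, 2}) -
      α 5 * (S {1, 2, 3} - S {2, 3}) - α 2 * (S {1, 3} - S {3}) ≥ 0

/-- `α ∈ ℝ^7` is 0B-valid: for every entropy function on the four parties
`0 = A`, `1 = B1`, `2 = B2`, `3 = V` satisfying SSA and WM,
`α_B S_{B2|B1} + α_AB S_{B2|B1A} + α_BV S_{B2|B1V} + α_ABV S_{B2|B1AV} ≥ 0`. -/
def Valid0B (α : Fin 7 → ℝ) : Prop :=
  ∀ S : Finset (Fin 4) → ℝ, S ∅ = 0 → SSAfn S → WMfn S →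
    α 1 * (S {1, 2} - S {1}) + α 3 * (S {0, 1, 2} - S {0, 1}) +
      α 5 * (S {1, 2, 3} - S {1, 3}) + α 6 * (S {0, 1, 2, 3} - S {0, 1, 3}) ≥ 0

/-!
Both validity conditions amount to an inequality `(α_AB)⁻ + (α_BV)⁻ ≤ a`, with `a = α_A` for 1A and
`a = α_B` for 0B, together with a linear equation that eliminates `α_V`, respectively `α_ABV`. Once
this equation is used, the functional reads `a * p + α_AB * q + α_BV * r`, where SSA and WM force
`0 ≤ q ≤ p` and `0 ≤ r ≤ p`. Conversely, shared classical bits and GHZ states realize the extreme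
values `p = 1`, `q, r ∈ {0, 1}`, and states with `p = q = r = 0` give the equation. The conditions
obtained in this way, with non-negativity in `V`, describe the cone over the seven rays because
`α_AB` and `α_BV` split into their positive and negative parts.
-/

section OrderedAlgebra

theorem negPart_add_negPart_le_iff {G : Type*} [AddCommGroup G] [LinearOrder G]
    [IsOrderedAddMonoid G] {a b c : G} :
    b⁻ + c⁻ ≤ a ↔ 0 ≤ a ∧ 0 ≤ a + b ∧ 0 ≤ a + c ∧ 0 ≤ a + b + c := by
  rw [negPart_def, negPart_def]
  grind

theorem negPart_sub_le {G : Type*} [AddCommGroup G] [LinearOrder G] [IsOrderedAddMonoid G]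
    {x y : G} (hx : 0 ≤ x) (hy : 0 ≤ y) : (x - y)⁻ ≤ y := by
  rw [negPart_def, neg_sub]
  exact sup_le (sub_le_self y hx) hy

theorem nonneg_of_negPart_add_negPart_le {R : Type*} [CommRing R] [LinearOrder R]
    [IsOrderedRing R] {a b c p q r : R} (ha : b⁻ + c⁻ ≤ a)
    (hq : 0 ≤ q) (hqp : q ≤ p) (hr : 0 ≤ r) (hrp : r ≤ p) : 0 ≤ a * p + b * q + c * r := by
  have hp : 0 ≤ p := hq.trans hqp
  calc
    0 ≤ (a - (b⁻ + c⁻)) * p + b⁻ * (p - q) + b⁺ * q + c⁻ * (p - r) + c⁺ * r := by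
      have := sub_nonneg.2 ha
      have := sub_nonneg.2 hqp
      have := sub_nonneg.2 hrp
      positivity
    _ = a * p + (b⁺ - b⁻) * q + (c⁺ - c⁻) * r := by ring
    _ = a * p + b * q + c * r := by rw [posPart_sub_negPart, posPart_sub_negPart]

end OrderedAlgebra

section EntropyInequalities

variable {P : Type} [DecidableEq P] {S : Finset P → ℝ} {X Y Z : Finset P}

theorem ssafn_iff_submodular :
    SSAfn S ↔ ∀ X Y : Finset P, S (X ∪ Y) + S (X ∩ Y) ≤ S X + S Y := by
  constructor
  · intro hS X Y
    have h := hS (X \ Y) (Y \ X) (X ∩ Y) disjoint_sdiff_sdiff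
      (Finset.disjoint_sdiff_inter X Y) (Finset.inter_comm X Y ▸ Finset.disjoint_sdiff_inter Y X)
    have hX : X \ Y ∪ X ∩ Y = X := Finset.sdiff_union_inter X Y
    have hY : Y \ X ∪ X ∩ Y = Y := by rw [Finset.inter_comm, Finset.sdiff_union_inter]
    have hXY : X \ Y ∪ Y \ X ∪ X ∩ Y = X ∪ Y := by
      rw [Finset.union_assoc, hY, Finset.sdiff_union_self_eq_union]
    rwa [hX, hY, hXY] at h
  · intro hS X Y Z hXY _ _
    have h := hS (X ∪ Z) (Y ∪ Z)
    rwa [← Finset.union_union_distrib_right, ← Finset.inter_union_distrib_right,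
      Finset.disjoint_iff_inter_eq_empty.1 hXY, Finset.empty_union] at h

theorem wmfn_of_monotone (hS : Monotone S) : WMfn S := fun _ _ _ _ _ _ =>
  add_le_add (hS Finset.subset_union_left) (hS Finset.subset_union_left)

theorem SSAfn.comp_sdiff (hS : SSAfn S) (I : Finset P) : SSAfn fun X => S (I \ X) := by
  rw [ssafn_iff_submodular] at hS ⊢
  intro X Y
  rw [Finset.sdiff_union_distrib, Finset.sdiff_inter_distrib_right, add_comm]
  exact hS (I \ X) (I \ Y)

/- As for a pure state on the parties in `I`: WM for `X, Y, Z` is submodularity for `X ∪ Z` and the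
complement of `Y ∪ Z`. -/
theorem SSAfn.wmfn_of_sdiff_eq {I : Finset P} (hS : SSAfn S) (hI : ∀ X, S (I \ X) = S X) :
    WMfn S := by
  intro X Y Z hXY hXZ hYZ
  have hunion : I \ (X ∪ Z ∪ I \ (Y ∪ Z)) = I \ (I \ Y) := by
    clear hI -- its instances at iterated differences would not terminate
    grind [Finset.disjoint_left]
  have hinter : (X ∪ Z) ∩ (I \ (Y ∪ Z)) = I \ (I \ X) := by
    clear hI
    grind [Finset.disjoint_left]
  calc
    S (X ∪ Z) + S (Y ∪ Z) = S (X ∪ Z) + S (I \ (Y ∪ Z)) := by rw [hI]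
    _ ≥ S (X ∪ Z ∪ I \ (Y ∪ Z)) + S ((X ∪ Z) ∩ (I \ (Y ∪ Z))) :=
      ssafn_iff_submodular.1 hS _ _
    _ = S X + S Y := by rw [← hI (X ∪ Z ∪ _), hunion, hinter, hI, hI, hI, hI, add_comm]

/-- The conditional entropy `S_{X|Y} = S_{XY} - S_Y`. It is the intended quantity only for
disjoint `X` and `Y`. -/
def condEntropy (S : Finset P → ℝ) (X Y : Finset P) : ℝ :=
  S (X ∪ Y) - S Y

theorem SSAfn.condEntropy_le_of_subset (hS : SSAfn S) (hYZ : Y ⊆ Z) (hXZ : Disjoint X Z) :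
    condEntropy S X Z ≤ condEntropy S X Y := by
  have h := hS X (Z \ Y) Y (hXZ.mono_right Finset.sdiff_subset) (hXZ.mono_right hYZ)
    Finset.sdiff_disjoint
  rw [Finset.union_assoc, Finset.sdiff_union_of_subset hYZ] at h
  unfold condEntropy
  linarith

theorem WMfn.condEntropy_add_condEntropy_nonneg (hS : WMfn S) (hXY : Disjoint X Y)
    (hXZ : Disjoint X Z) (hYZ : Disjoint Y Z) : 0 ≤ condEntropy S X Y + condEntropy S X Z := by
  have h := hS Y Z X hYZ hXY.symm hXZ.symm
  rw [Finset.union_comm Y, Finset.union_comm Z] at h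
  unfold condEntropy
  linarith

end EntropyInequalities

section ModelEntropies

variable {P : Type} [DecidableEq P]

/-- The entropy function of a classical uniform bit, in units of `log 2`, of which each party
in `I` holds a copy. -/
noncomputable def sharedBitEntropy (I X : Finset P) : ℝ :=
  if Disjoint X I then 0 else 1

/-- The entropy function of a GHZ state shared by the parties in `I`, in units of `log 2`. For
two parties this is a maximally entangled pair of qubits. -/
noncomputable def ghzEntropy (I X : Finset P) : ℝ :=
  if Disjoint X I ∨ I ⊆ X then 0 else 1

@[simp]
theorem sharedBitEntropy_empty (I : Finset P) : sharedBitEntropy I ∅ = 0 := by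
  simp [sharedBitEntropy]

@[simp]
theorem ghzEntropy_empty (I : Finset P) : ghzEntropy I ∅ = 0 := by
  simp [ghzEntropy]

theorem sharedBitEntropy_mono (I : Finset P) : Monotone (sharedBitEntropy I) := by
  intro X Y hXY
  by_cases hY : Disjoint Y I
  · simp [sharedBitEntropy, hY, hY.mono_left hXY]
  · simp only [sharedBitEntropy, hY, if_false]
    split_ifs <;> norm_num

theorem ssafn_sharedBitEntropy (I : Finset P) : SSAfn (sharedBitEntropy I) := by
  intro X Y Z _ _ _
  simp only [sharedBitEntropy, Finset.disjoint_union_left]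
  by_cases hX : Disjoint X I <;> by_cases hY : Disjoint Y I <;> by_cases hZ : Disjoint Z I <;>
    simp [hX, hY, hZ]

theorem wmfn_sharedBitEntropy (I : Finset P) : WMfn (sharedBitEntropy I) :=
  wmfn_of_monotone (sharedBitEntropy_mono I)

theorem disjoint_sdiff_left_iff_subset {I X : Finset P} : Disjoint (I \ X) I ↔ I ⊆ X := by
  grind [Finset.disjoint_left]

theorem ghzEntropy_sdiff (I X : Finset P) : ghzEntropy I (I \ X) = ghzEntropy I X := by
  have hsub : I ⊆ I \ X ↔ Disjoint X I := by
    grind [Finset.disjoint_left]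
  simp only [ghzEntropy, disjoint_sdiff_left_iff_subset, hsub, or_comm]

/- The right-hand side is the mutual information of the shared bit between the holders inside and
outside `X`. -/
theorem ghzEntropy_eq_sharedBitEntropy (I X : Finset P) :
    ghzEntropy I X =
      sharedBitEntropy I X + sharedBitEntropy I (I \ X) - sharedBitEntropy I I := by
  rcases I.eq_empty_or_nonempty with rfl | hI
  · simp [ghzEntropy, sharedBitEntropy]
  have hnot : Disjoint X I → ¬I ⊆ X := fun hX h => hI.ne_empty (hX.symm.eq_bot_of_le h)
  by_cases hX : Disjoint X I <;> by_cases hIX : I ⊆ X <;>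
    simp_all [ghzEntropy, sharedBitEntropy, disjoint_sdiff_left_iff_subset, hI.ne_empty]

theorem ssafn_ghzEntropy (I : Finset P) : SSAfn (ghzEntropy I) := by
  intro X Y Z hXY hXZ hYZ
  have hbit := ssafn_sharedBitEntropy I X Y Z hXY hXZ hYZ
  have hsdiff := (ssafn_sharedBitEntropy I).comp_sdiff I X Y Z hXY hXZ hYZ
  simp only [ghzEntropy_eq_sharedBitEntropy]
  linarith

theorem wmfn_ghzEntropy (I : Finset P) : WMfn (ghzEntropy I) :=
  (ssafn_ghzEntropy I).wmfn_of_sdiff_eq (ghzEntropy_sdiff I)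

end ModelEntropies

section Validity

variable {α : Fin 7 → ℝ}

theorem valid1A_iff_condEntropy :
    Valid1A α ↔ ∀ S : Finset (Fin 4) → ℝ, S ∅ = 0 → SSAfn S → WMfn S →
      0 ≤ α 0 * condEntropy S {1} {0} + α 3 * condEntropy S {1} {0, 2} -
        α 5 * condEntropy S {1} {2, 3} - α 2 * condEntropy S {1} {3} := by
  have h₀ : ({1} ∪ {0} : Finset (Fin 4)) = {0, 1} := by decide
  have h₀₂ : ({1} ∪ {0, 2} : Finset (Fin 4)) = {0, 1, 2} := by decide
  have h₂₃ : ({1} ∪ {2, 3} : Finset (Fin 4)) = {1, 2, 3} := by decide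
  have h₃ : ({1} ∪ {3} : Finset (Fin 4)) = {1, 3} := by decide
  simp only [Valid1A, condEntropy, h₀, h₀₂, h₂₃, h₃, ge_iff_le]

theorem valid0B_iff_condEntropy :
    Valid0B α ↔ ∀ S : Finset (Fin 4) → ℝ, S ∅ = 0 → SSAfn S → WMfn S →
      0 ≤ α 1 * condEntropy S {2} {1} + α 3 * condEntropy S {2} {0, 1} +
        α 5 * condEntropy S {2} {1, 3} + α 6 * condEntropy S {2} {0, 1, 3} := by
  have h₁ : ({2} ∪ {1} : Finset (Fin 4)) = {1, 2} := by decide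
  have h₀₁ : ({2} ∪ {0, 1} : Finset (Fin 4)) = {0, 1, 2} := by decide
  have h₁₃ : ({2} ∪ {1, 3} : Finset (Fin 4)) = {1, 2, 3} := by decide
  have h₀₁₃ : ({2} ∪ {0, 1, 3} : Finset (Fin 4)) = {0, 1, 2, 3} := by decide
  simp only [Valid0B, condEntropy, h₁, h₀₁, h₁₃, h₀₁₃, ge_iff_le]

theorem Valid1A.sum_eq_zero_and_negPart_le (hα : Valid1A α) :
    α 0 + α 2 + α 3 + α 5 = 0 ∧ (α 3)⁻ + (α 5)⁻ ≤ α 0 := by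
  have hbit (I : Finset (Fin 4)) := hα (sharedBitEntropy I) (sharedBitEntropy_empty I)
    (ssafn_sharedBitEntropy I) (wmfn_sharedBitEntropy I)
  have hghz (I : Finset (Fin 4)) := hα (ghzEntropy I) (ghzEntropy_empty I)
    (ssafn_ghzEntropy I) (wmfn_ghzEntropy I)
  have sum_nonpos : 0 ≤ -α 0 + -α 3 - α 5 - α 2 := by
    simpa +decide [ghzEntropy] using hghz {0, 1}
  have sum_nonneg : 0 ≤ α 0 + α 3 + α 5 + α 2 := by
    simpa +decide [ghzEntropy] using hghz {1, 3}
  have h_A : 0 ≤ α 0 := by simpa +decide [sharedBitEntropy] using hbit {1, 2, 3}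
  have h_A_AB : α 2 ≤ -α 5 := by
    simpa +decide [sharedBitEntropy] using hbit {0, 1}
  have h_A_BV : α 2 ≤ -α 3 := by simpa +decide [ghzEntropy] using hghz {0, 1, 2}
  have h_A_AB_BV : α 2 ≤ 0 := by simpa +decide [sharedBitEntropy] using hbit {0, 1, 2}
  refine ⟨by linarith, negPart_add_negPart_le_iff.2 ⟨h_A, ?_, ?_, ?_⟩⟩ <;> linarith

theorem valid1A_of_negPart_le (hsum : α 0 + α 2 + α 3 + α 5 = 0)
    (hle : (α 3)⁻ + (α 5)⁻ ≤ α 0) : Valid1A α := by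
  refine valid1A_iff_condEntropy.2 fun S _ hS hW => ?_
  have h₀₂₃ : 0 ≤ condEntropy S {1} {0, 2} + condEntropy S {1} {3} :=
    hW.condEntropy_add_condEntropy_nonneg (by decide) (by decide) (by decide)
  have h₀_₂₃ : 0 ≤ condEntropy S {1} {0} + condEntropy S {1} {2, 3} :=
    hW.condEntropy_add_condEntropy_nonneg (by decide) (by decide) (by decide)
  have h₀ : condEntropy S {1} {0, 2} ≤ condEntropy S {1} {0} :=
    hS.condEntropy_le_of_subset (by decide) (by decide)
  have h₃ : condEntropy S {1} {2, 3} ≤ condEntropy S {1} {3} :=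
    hS.condEntropy_le_of_subset (by decide) (by decide)
  calc
    0 ≤ α 0 * (condEntropy S {1} {0} + condEntropy S {1} {3}) +
          α 3 * (condEntropy S {1} {0, 2} + condEntropy S {1} {3}) +
          α 5 * (condEntropy S {1} {3} - condEntropy S {1} {2, 3}) := by
      apply nonneg_of_negPart_add_negPart_le hle <;> linarith
    _ = _ := by
      linear_combination condEntropy S {1} {3} * hsum

theorem Valid0B.sum_eq_zero_and_negPart_le (hα : Valid0B α) :
    α 1 + α 3 + α 5 + α 6 = 0 ∧ (α 3)⁻ + (α 5)⁻ ≤ α 1 := by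
  have hbit (I : Finset (Fin 4)) := hα (sharedBitEntropy I) (sharedBitEntropy_empty I)
    (ssafn_sharedBitEntropy I) (wmfn_sharedBitEntropy I)
  have hghz (I : Finset (Fin 4)) := hα (ghzEntropy I) (ghzEntropy_empty I)
    (ssafn_ghzEntropy I) (wmfn_ghzEntropy I)
  have sum_nonpos : 0 ≤ -α 1 + -α 3 + -α 5 + -α 6 := by
    simpa +decide [ghzEntropy] using hghz {1, 2}
  have sum_nonneg : 0 ≤ α 1 + α 3 + α 5 + α 6 := by
    simpa +decide [sharedBitEntropy] using hbit {2}
  have h_B : 0 ≤ α 1 := by simpa +decide [sharedBitEntropy] using hbit {0, 2, 3}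
  have h_B_AB : 0 ≤ α 1 + α 3 := by simpa +decide [sharedBitEntropy] using hbit {2, 3}
  have h_B_BV : 0 ≤ α 1 + α 5 := by simpa +decide [sharedBitEntropy] using hbit {0, 2}
  have h_B_AB_BV : α 6 ≤ 0 := by simpa +decide [ghzEntropy] using hghz {0, 1, 2, 3}
  exact ⟨by linarith, negPart_add_negPart_le_iff.2 ⟨h_B, h_B_AB, h_B_BV, by linarith⟩⟩

theorem valid0B_of_negPart_le (hsum : α 1 + α 3 + α 5 + α 6 = 0)
    (hle : (α 3)⁻ + (α 5)⁻ ≤ α 1) : Valid0B α := by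
  refine valid0B_iff_condEntropy.2 fun S _ hS _ => ?_
  have h₁_₀₁ : condEntropy S {2} {0, 1} ≤ condEntropy S {2} {1} :=
    hS.condEntropy_le_of_subset (by decide) (by decide)
  have h₁_₁₃ : condEntropy S {2} {1, 3} ≤ condEntropy S {2} {1} :=
    hS.condEntropy_le_of_subset (by decide) (by decide)
  have h₀₁_₀₁₃ : condEntropy S {2} {0, 1, 3} ≤ condEntropy S {2} {0, 1} :=
    hS.condEntropy_le_of_subset (by decide) (by decide)
  have h₁₃_₀₁₃ : condEntropy S {2} {0, 1, 3} ≤ condEntropy S {2} {1, 3} :=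
    hS.condEntropy_le_of_subset (by decide) (by decide)
  calc
    0 ≤ α 1 * (condEntropy S {2} {1} - condEntropy S {2} {0, 1, 3}) +
          α 3 * (condEntropy S {2} {0, 1} - condEntropy S {2} {0, 1, 3}) +
          α 5 * (condEntropy S {2} {1, 3} - condEntropy S {2} {0, 1, 3}) := by
      apply nonneg_of_negPart_add_negPart_le hle <;> linarith
    _ = _ := by
      linear_combination -condEntropy S {2} {0, 1, 3} * hsum

theorem valid1A_iff :
    Valid1A α ↔ α 0 + α 2 + α 3 + α 5 = 0 ∧ (α 3)⁻ + (α 5)⁻ ≤ α 0 :=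
  ⟨Valid1A.sum_eq_zero_and_negPart_le, fun h => valid1A_of_negPart_le h.1 h.2⟩

theorem valid0B_iff :
    Valid0B α ↔ α 1 + α 3 + α 5 + α 6 = 0 ∧ (α 3)⁻ + (α 5)⁻ ≤ α 1 :=
  ⟨Valid0B.sum_eq_zero_and_negPart_le, fun h => valid0B_of_negPart_le h.1 h.2⟩

end Validity

section ExtremeRays

/-- The seven generators of the cone `C ∩ 10` listed in Table 2, with components in the order
`α_A, α_B, α_V, α_AB, α_AV, α_BV, α_ABV`. -/
def coneC10Ray : Fin 7 → Fin 7 → ℝ :=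
  ![![0, 0, 0, 0, 1, 0, 0], ![1, 1, 0, -1, 0, 0, 0],
    ![0, 0, -1, 0, 1, 1, -1], ![1, 1, 0, 0, 1, -1, 0], ![0, 0, -1, 1, 2, 0, -1],
    ![0, 1, 0, 0, 1, 0, -1], ![1, 0, -1, 0, 1, 0, 0]]

theorem sum_smul_coneC10Ray (c : Fin 7 → ℝ) :
    ∑ i, c i • coneC10Ray i =
      ![c 1 + c 3 + c 6, c 1 + c 3 + c 5, -(c 2 + c 4 + c 6), c 4 - c 1,
        c 0 + c 2 + c 3 + 2 * c 4 + c 5 + c 6, c 2 - c 3, -(c 2 + c 4 + c 5)] := by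
  ext j
  fin_cases j <;> simp [coneC10Ray, Fin.sum_univ_seven] <;> ring

theorem exists_nonneg_eq_sum_smul_coneC10Ray_iff {α : Fin 7 → ℝ} :
    (∃ c : Fin 7 → ℝ, (∀ i, 0 ≤ c i) ∧ α = ∑ i, c i • coneC10Ray i) ↔
      (α 0 + α 2 + α 3 + α 5 = 0 ∧ (α 3)⁻ + (α 5)⁻ ≤ α 0) ∧
        (α 1 + α 3 + α 5 + α 6 = 0 ∧ (α 3)⁻ + (α 5)⁻ ≤ α 1) ∧
          0 ≤ α 2 + α 4 + α 5 + α 6 := by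
  constructor
  · rintro ⟨c, hc, rfl⟩
    rw [sum_smul_coneC10Ray]
    have hAB : (c 4 - c 1)⁻ ≤ c 1 := negPart_sub_le (hc 4) (hc 1)
    have hBV : (c 2 - c 3)⁻ ≤ c 3 := negPart_sub_le (hc 2) (hc 3)
    simp only [Matrix.cons_val]
    exact ⟨⟨by ring, by linarith [hc 6]⟩, ⟨by ring, by linarith [hc 5]⟩, by linarith [hc 0]⟩
  · rintro ⟨⟨hV, hA⟩, ⟨hABV, hB⟩, hC⟩
    have h₃ : (α 3)⁺ - (α 3)⁻ = α 3 := posPart_sub_negPart _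
    have h₅ : (α 5)⁺ - (α 5)⁻ = α 5 := posPart_sub_negPart _
    refine ⟨![α 2 + α 4 + α 5 + α 6, (α 3)⁻, (α 5)⁺, (α 5)⁻, (α 3)⁺,
      α 1 - ((α 3)⁻ + (α 5)⁻), α 0 - ((α 3)⁻ + (α 5)⁻)], ?_, ?_⟩
    · simp [Fin.forall_fin_succ, *]
    · rw [sum_smul_coneC10Ray]
      ext j
      fin_cases j <;> simp <;> linarith

end ExtremeRays

/-- Characterization of the cone `C ∩ 10`: `α` is 1A-valid, 0B-valid and non-negative in
`V` iff it is a nonnegative linear combination of the seven extreme rays of Table 2. -/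
theorem coneC10_characterization (α : Fin 7 → ℝ) :
    (Valid1A α ∧ Valid0B α ∧ α 2 + α 4 + α 5 + α 6 ≥ 0) ↔
      ∃ c : Fin 7 → ℝ, (∀ i, 0 ≤ c i) ∧
        α = ∑ i, c i • (![![0, 0, 0, 0, 1, 0, 0], ![1, 1, 0, -1, 0, 0, 0],
          ![0, 0, -1, 0, 1, 1, -1], ![1, 1, 0, 0, 1, -1, 0], ![0, 0, -1, 1, 2, 0, -1],
          ![0, 1, 0, 0, 1, 0, -1], ![1, 0, -1, 0, 1, 0, 0]] : Fin 7 → Fin 7 → ℝ) i := by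
  rw [valid1A_iff, valid0B_iff, ge_iff_le]
  exact exists_nonneg_eq_sum_smul_coneC10Ray_iff.symm
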